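/- Let p ∈ (2,∞), let b : ℝ → ℝ be a bounded 2π-periodic function with mean B = (1/2π)∫₀^{2π} b(t) dt, and let ε = 1/(2k) for a positive integer k. Then for every function ω : [0,2π] → ℝ in the fractional Sobolev space W^{1−1/p,p}([0,2π]), |∫₀^{2π} ω(x)(B − b(x/ε)) dx| ≤ (2π)^{(2p−2)/p} · ‖b‖_∞ · ε^{(p−1)/p} · [ω]_{W^{1−1/p,p}}, where [ω]_{W^{1−1/p,p}} = (∫₀^{2π}∫₀^{2π} |ω(x)−ω(t)|^p / |x−t|^p dt dx)^{1/p} is the Gagliardo seminorm. -/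

import Mathlib

open MeasureTheory Real

/-!
Let `c` have period `h`, let `T` be a multiple of `h`, and let `C ⊆ (0, T]²` be the union of the
diagonal squares of the grid of width `h`. The mean of `c` is its average over the cell of any
point, so Fubini and the symmetry of `C` give
`h ∫ (mean c - c x) ω x dx = ∬_C c x (ω t - ω x) dx dt`.
On `C` we have `|t - x| ≤ h`, hence `‖ω t - ω x‖` is at most `h` times the norm of the slope of `ω`
between `x` and `t`, and the factor `h` cancels. Hölder's inequality on `C`, which has measure
`T h`, then bounds the integral of the slope by its `L^p` norm, which is the Gagliardo seminorm.
-/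

section Fubini

variable {α β E : Type*} [MeasurableSpace α] [MeasurableSpace β] {μ : Measure α} {ν : Measure β}
  [SFinite μ] [SFinite ν] [NormedAddCommGroup E]

lemma setIntegral_prod_eq_integral_section [NormedSpace ℝ E] {C : Set (α × β)}
    (hC : MeasurableSet C) {f : α × β → E} (hf : IntegrableOn f C (μ.prod ν)) :
    ∫ z in C, f z ∂μ.prod ν = ∫ x, ∫ y in {y | (x, y) ∈ C}, f (x, y) ∂ν ∂μ := by
  rw [← integral_indicator hC, integral_prod _ (hf.integrable_indicator hC)]
  exact integral_congr_ae (ae_of_all _ fun x => integral_indicator (measurable_prodMk_left hC))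

lemma setIntegral_prod_eq_integral_section_symm [NormedSpace ℝ E] {C : Set (α × β)}
    (hC : MeasurableSet C) {f : α × β → E} (hf : IntegrableOn f C (μ.prod ν)) :
    ∫ z in C, f z ∂μ.prod ν = ∫ y, ∫ x in {x | (x, y) ∈ C}, f (x, y) ∂μ ∂ν := by
  rw [← integral_indicator hC, integral_prod_symm _ (hf.integrable_indicator hC)]
  exact integral_congr_ae (ae_of_all _ fun y => integral_indicator (measurable_prodMk_right hC))

lemma measureReal_prod_eq_integral_section {C : Set (α × β)} (hC : MeasurableSet C)
    (hfin : μ.prod ν C ≠ ⊤) :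
    (μ.prod ν).real C = ∫ x, ν.real {y | (x, y) ∈ C} ∂μ := by
  simpa using setIntegral_prod_eq_integral_section hC (f := fun _ => (1 : ℝ))
    (integrableOn_const hfin)

end Fubini

section AverageOverSections

variable {α E : Type*} [MeasurableSpace α] {μ : Measure α} [IsFiniteMeasure μ]
  [NormedAddCommGroup E] [NormedSpace ℝ E] [CompleteSpace E]

lemma setIntegral_smul_sub_eq_smul_integral_sub_smul {C : Set (α × α)} (hC : MeasurableSet C)
    (hsymm : ∀ x y, (x, y) ∈ C ↔ (y, x) ∈ C) {h m : ℝ} {c : α → ℝ} {ω : α → E}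
    (hc : MemLp c ⊤ μ) (hω : Integrable ω μ)
    (hvol : ∀ᵐ x ∂μ, μ.real {y | (x, y) ∈ C} = h)
    (hmean : ∀ᵐ x ∂μ, ∫ y in {y | (x, y) ∈ C}, c y ∂μ = h * m) :
    ∫ z in C, c z.1 • (ω z.2 - ω z.1) ∂μ.prod μ = h • ∫ x, (m - c x) • ω x ∂μ := by
  have hcω : Integrable (fun x => c x • ω x) μ := hω.smul_of_top_right hc
  have hoff : Integrable (fun z : α × α => c z.1 • ω z.2) (μ.prod μ) :=
    (hc.integrable le_top).smul_prod hω
  have hdiag : Integrable (fun z : α × α => c z.1 • ω z.1) (μ.prod μ) := hcω.comp_fst μ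
  have hoff_eq : ∫ z in C, c z.1 • ω z.2 ∂μ.prod μ = ∫ y, (h * m) • ω y ∂μ := by
    rw [setIntegral_prod_eq_integral_section_symm hC hoff.integrableOn]
    refine integral_congr_ae (hmean.mono fun y hy => ?_)
    simp only [integral_smul_const, hsymm _ y, hy]
  have hdiag_eq : ∫ z in C, c z.1 • ω z.1 ∂μ.prod μ = ∫ x, h • c x • ω x ∂μ := by
    rw [setIntegral_prod_eq_integral_section hC hdiag.integrableOn]
    refine integral_congr_ae (hvol.mono fun x hx => ?_)
    simp only [setIntegral_const, hx]
  simp only [smul_sub]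
  rw [integral_sub hoff.integrableOn hdiag.integrableOn, hoff_eq, hdiag_eq]
  simp only [mul_smul, integral_smul, sub_smul, ← smul_sub]
  rw [integral_sub (hω.fun_smul m) hcω, integral_smul]

end AverageOverSections

section Holder

variable {α E : Type*} [MeasurableSpace α] {μ : Measure α} [NormedAddCommGroup E]

lemma setIntegral_norm_le_measureReal_rpow_mul {p : ℝ} (hp : 1 ≤ p) {f : α → E}
    (hf : MemLp f (ENNReal.ofReal p) μ) {s : Set α} (hs : μ s ≠ ⊤) :
    ∫ x in s, ‖f x‖ ∂μ ≤ μ.real s ^ (1 - 1 / p) * (∫ x, ‖f x‖ ^ p ∂μ) ^ (1 / p) := by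
  have hp0 : 0 < p := by linarith
  have hbound : eLpNorm f 1 (μ.restrict s) ≤
      eLpNorm f (ENNReal.ofReal p) μ * μ s ^ (1 - 1 / p) := by
    have hle := eLpNorm_le_eLpNorm_mul_rpow_measure_univ (ENNReal.one_le_ofReal.2 hp)
      hf.aestronglyMeasurable.restrict (μ := μ.restrict s)
    simp only [Measure.restrict_apply_univ, ENNReal.toReal_one, ENNReal.toReal_ofReal hp0.le,
      div_one] at hle
    exact hle.trans (mul_le_mul_left (eLpNorm_restrict_le _ _ _ _) _)
  have hexp : 0 ≤ 1 - 1 / p := sub_nonneg.2 ((div_le_one hp0).2 hp)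
  have hreal := ENNReal.toReal_mono
    (ENNReal.mul_ne_top hf.eLpNorm_ne_top (ENNReal.rpow_ne_top_of_nonneg hexp hs)) hbound
  rw [ENNReal.toReal_mul, ← ENNReal.toReal_rpow,
    toReal_eLpNorm hf.aestronglyMeasurable, toReal_eLpNorm hf.aestronglyMeasurable.restrict,
    lpNorm_one_eq_integral_norm hf.aestronglyMeasurable.restrict,
    lpNorm_eq_integral_norm_rpow_toReal (by simpa using hp0) ENNReal.ofReal_ne_top
      hf.aestronglyMeasurable, ENNReal.toReal_ofReal hp0.le, mul_comm, ← one_div] at hreal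
  exact hreal

end Holder

section SameCell

/-- The pairs of real numbers lying in a common cell `(n * h, (n + 1) * h]`, `n : ℤ`, of the grid of
width `h`, over which periodic functions are averaged. Rounding up selects half-open cells closed on
the right, so that they tile `Set.Ioc 0 (N * h)` exactly. -/
def sameCell (h : ℝ) : Set (ℝ × ℝ) := {z | ⌈z.1 / h⌉ = ⌈z.2 / h⌉}

variable {h : ℝ}

lemma measurableSet_sameCell : MeasurableSet (sameCell h) :=
  measurableSet_eq_fun (Int.measurable_ceil.comp (measurable_fst.div_const h))
    (Int.measurable_ceil.comp (measurable_snd.div_const h))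

lemma mem_sameCell_comm (x y : ℝ) : (x, y) ∈ sameCell h ↔ (y, x) ∈ sameCell h :=
  eq_comm

lemma mem_sameCell_iff (hh : 0 < h) {x y : ℝ} :
    (x, y) ∈ sameCell h ↔ y ∈ Set.Ioc ((⌈x / h⌉ - 1) * h) (⌈x / h⌉ * h) := by
  change ⌈x / h⌉ = ⌈y / h⌉ ↔ _
  rw [eq_comm, Int.ceil_eq_iff, lt_div_iff₀ hh, div_le_iff₀ hh, Set.mem_Ioc]

lemma abs_sub_le_of_mem_sameCell (hh : 0 < h) {x y : ℝ} (hxy : (x, y) ∈ sameCell h) :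
    |y - x| ≤ h := by
  have hx := (mem_sameCell_iff hh).1 (show (x, x) ∈ sameCell h from rfl)
  have hy := (mem_sameCell_iff hh).1 hxy
  exact abs_sub_le_iff.2 ⟨by linarith [hx.1, hy.2], by linarith [hx.2, hy.1]⟩

variable {N : ℕ} {x : ℝ}

lemma restrict_Ioc_restrict_sameCell (hh : 0 < h) (hx : x ∈ Set.Ioc 0 (N * h)) :
    (volume.restrict (Set.Ioc 0 (N * h))).restrict {y | (x, y) ∈ sameCell h} =
      volume.restrict (Set.Ioc ((⌈x / h⌉ - 1) * h) (⌈x / h⌉ * h)) := by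
  have hlower : (1 : ℝ) ≤ ⌈x / h⌉ := by
    exact_mod_cast Int.one_le_ceil_iff.2 (div_pos hx.1 hh)
  have hupper : (⌈x / h⌉ : ℝ) ≤ N := by
    exact_mod_cast Int.ceil_le.2 (show x / h ≤ (N : ℤ) by simpa [div_le_iff₀ hh] using hx.2)
  have hsubset : Set.Ioc ((⌈x / h⌉ - 1) * h) (⌈x / h⌉ * h) ⊆ Set.Ioc 0 (N * h) :=
    Set.Ioc_subset_Ioc (mul_nonneg (by linarith) hh.le) (by gcongr)
  simp only [mem_sameCell_iff hh, Set.ofPred_mem_eq]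
  rw [Measure.restrict_restrict measurableSet_Ioc, Set.inter_eq_left.2 hsubset]

lemma measureReal_sameCell_section (hh : 0 < h) (hx : x ∈ Set.Ioc 0 (N * h)) :
    (volume.restrict (Set.Ioc 0 (N * h))).real {y | (x, y) ∈ sameCell h} = h := by
  rw [← measureReal_restrict_apply_univ, restrict_Ioc_restrict_sameCell hh hx,
    measureReal_restrict_apply_univ, Real.volume_real_Ioc_of_le (by gcongr; linarith)]
  ring

lemma measureReal_sameCell (hh : 0 < h) :
    ((volume.restrict (Set.Ioc 0 (N * h))).prod (volume.restrict (Set.Ioc 0 (N * h)))).real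
      (sameCell h) = N * h * h := by
  rw [measureReal_prod_eq_integral_section measurableSet_sameCell (measure_ne_top _ _),
    setIntegral_congr_fun measurableSet_Ioc fun x hx => measureReal_sameCell_section hh hx,
    setIntegral_const, Real.volume_real_Ioc_of_le (by positivity), sub_zero, smul_eq_mul]

lemma setIntegral_sameCell_section_of_periodic {c : ℝ → ℝ} (hper : Function.Periodic c h)
    (hh : 0 < h) (hx : x ∈ Set.Ioc 0 (N * h)) :
    ∫ y in {y | (x, y) ∈ sameCell h}, c y ∂volume.restrict (Set.Ioc 0 (N * h)) =
      h * ⨍ t in Set.Ioc 0 h, c t := by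
  have hright : ⌈x / h⌉ * h = (⌈x / h⌉ - 1) * h + h := by ring
  rw [restrict_Ioc_restrict_sameCell hh hx, hright,
    ← intervalIntegral.integral_of_le (by linarith), hper.intervalIntegral_add_eq _ 0, zero_add,
    intervalIntegral.integral_of_le hh.le, setAverage_eq, Real.volume_real_Ioc_of_le hh.le,
    sub_zero, smul_eq_mul, mul_inv_cancel_left₀ hh.ne']

end SameCell

section Oscillation

variable {E : Type*} [NormedAddCommGroup E] [NormedSpace ℝ E]

lemma norm_slope_rpow (ω : ℝ → E) (p x t : ℝ) :
    ‖slope ω x t‖ ^ p = ‖ω x - ω t‖ ^ p / |x - t| ^ p := by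
  rw [slope_comm, slope_def_module, norm_smul, norm_inv, Real.norm_eq_abs, ← div_eq_inv_mul,
    div_rpow (norm_nonneg _) (abs_nonneg _)]

lemma aestronglyMeasurable_slope {μ : Measure ℝ} {ω : ℝ → E}
    (hω : AEStronglyMeasurable ω μ) :
    AEStronglyMeasurable (fun z : ℝ × ℝ => slope ω z.1 z.2) (μ.prod μ) := by
  have hinv : Measurable fun z : ℝ × ℝ => (z.2 - z.1)⁻¹ := by fun_prop
  exact hinv.aestronglyMeasurable.smul (hω.comp_snd.sub hω.comp_fst)

variable [CompleteSpace E] {ω : ℝ → E} {h M : ℝ} {N : ℕ} {c : ℝ → ℝ}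

lemma norm_integral_average_sub_smul_le_setIntegral_slope (hh : 0 < h)
    (hc : AEStronglyMeasurable c) (hper : Function.Periodic c h) (hM : ∀ᵐ t, |c t| ≤ M)
    (hω : IntegrableOn ω (Set.Ioc 0 (N * h)))
    (hslope : IntegrableOn (fun z : ℝ × ℝ => slope ω z.1 z.2) (sameCell h)
      ((volume.restrict (Set.Ioc 0 (N * h))).prod (volume.restrict (Set.Ioc 0 (N * h))))) :
    ‖∫ x in Set.Ioc 0 (N * h), ((⨍ t in Set.Ioc 0 h, c t) - c x) • ω x‖ ≤
      M * ∫ z in sameCell h, ‖slope ω z.1 z.2‖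
        ∂(volume.restrict (Set.Ioc 0 (N * h))).prod (volume.restrict (Set.Ioc 0 (N * h))) := by
  set μ := volume.restrict (Set.Ioc 0 (N * h))
  have hMμ : ∀ᵐ t ∂μ, |c t| ≤ M := ae_restrict_of_ae hM
  have hincrement := setIntegral_smul_sub_eq_smul_integral_sub_smul measurableSet_sameCell
    mem_sameCell_comm (memLp_top_of_bound hc.restrict M hMμ) hω
    (ae_restrict_of_forall_mem measurableSet_Ioc fun x => measureReal_sameCell_section hh)
    (ae_restrict_of_forall_mem measurableSet_Ioc fun x =>
      setIntegral_sameCell_section_of_periodic hper hh)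
  have hpointwise : ∀ᵐ z ∂(μ.prod μ).restrict (sameCell h),
      ‖c z.1 • (ω z.2 - ω z.1)‖ ≤ h * (M * ‖slope ω z.1 z.2‖) := by
    filter_upwards [ae_restrict_mem measurableSet_sameCell,
      ae_restrict_of_ae (Measure.quasiMeasurePreserving_fst.ae hMμ)] with z hz hcz
    calc ‖c z.1 • (ω z.2 - ω z.1)‖ = |c z.1| * (|z.2 - z.1| * ‖slope ω z.1 z.2‖) := by
          rw [← vsub_eq_sub, ← sub_smul_slope, norm_smul, norm_smul, Real.norm_eq_abs,
            Real.norm_eq_abs]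
      _ ≤ M * (h * ‖slope ω z.1 z.2‖) := by
          gcongr
          · exact (abs_nonneg _).trans hcz
          · exact abs_sub_le_of_mem_sameCell hh hz
      _ = h * (M * ‖slope ω z.1 z.2‖) := mul_left_comm _ _ _
  have hbound := norm_integral_le_of_norm_le ((hslope.norm.const_mul M).const_mul h) hpointwise
  rw [hincrement, norm_smul, Real.norm_of_nonneg hh.le, integral_const_mul,
    integral_const_mul] at hbound
  exact le_of_mul_le_mul_left hbound hh

theorem norm_integral_average_sub_smul_le {p : ℝ} (hp : 1 ≤ p) (hh : 0 < h)
    (hc : AEStronglyMeasurable c) (hper : Function.Periodic c h) (hM : ∀ᵐ t, |c t| ≤ M)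
    (hω : IntegrableOn ω (Set.Ioc 0 (N * h)))
    (hslope : IntegrableOn (fun z : ℝ × ℝ => ‖slope ω z.1 z.2‖ ^ p)
      (Set.Ioc 0 (N * h) ×ˢ Set.Ioc 0 (N * h))) :
    ‖∫ x in Set.Ioc 0 (N * h), ((⨍ t in Set.Ioc 0 h, c t) - c x) • ω x‖ ≤
      M * ((N * h * h) ^ (1 - 1 / p) *
        (∫ x in Set.Ioc 0 (N * h), ∫ t in Set.Ioc 0 (N * h), ‖slope ω x t‖ ^ p) ^ (1 / p)) := by
  have hp0 : 0 < p := by linarith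
  have hM0 : 0 ≤ M := hM.exists.elim fun t ht => (abs_nonneg _).trans ht
  rw [IntegrableOn, Measure.volume_eq_prod, ← Measure.prod_restrict] at hslope
  have hmemLp : MemLp (fun z : ℝ × ℝ => slope ω z.1 z.2) (ENNReal.ofReal p)
      ((volume.restrict (Set.Ioc 0 (N * h))).prod (volume.restrict (Set.Ioc 0 (N * h)))) := by
    rw [← integrable_norm_rpow_iff (aestronglyMeasurable_slope hω.aestronglyMeasurable)
      (by simpa using hp0) ENNReal.ofReal_ne_top, ENNReal.toReal_ofReal hp0.le]
    exact hslope
  have hholder := setIntegral_norm_le_measureReal_rpow_mul hp hmemLp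
    (measure_ne_top _ (sameCell h))
  rw [measureReal_sameCell hh, integral_prod _ hslope] at hholder
  have hintegrable := hmemLp.integrable (ENNReal.one_le_ofReal.2 hp)
  exact (norm_integral_average_sub_smul_le_setIntegral_slope hh hc hper hM hω
    hintegrable.integrableOn).trans (mul_le_mul_of_nonneg_left hholder hM0)

end Oscillation

section Rescaling

lemma quasiMeasurePreserving_mul_left_volume {a : ℝ} (ha : a ≠ 0) :
    Measure.QuasiMeasurePreserving (fun t : ℝ => a * t) :=
  ⟨measurable_const_mul a, by
    rw [Real.map_volume_mul_left ha]; exact Measure.smul_absolutelyContinuous⟩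

lemma setAverage_Ioc_comp_mul_left {E : Type*} [NormedAddCommGroup E] [NormedSpace ℝ E]
    {a T : ℝ} (ha : 0 < a) (hT : 0 ≤ T) (f : ℝ → E) :
    ⨍ t in Set.Ioc 0 (T / a), f (a * t) = ⨍ t in Set.Ioc 0 T, f t := by
  have hTa : 0 ≤ T / a := by positivity
  rw [setAverage_eq, setAverage_eq, Real.volume_real_Ioc_of_le hT,
    Real.volume_real_Ioc_of_le hTa, ← intervalIntegral.integral_of_le hT,
    ← intervalIntegral.integral_of_le hTa, intervalIntegral.integral_comp_mul_left f ha.ne',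
    mul_zero, mul_div_cancel₀ T ha.ne', smul_smul]
  congr 1
  field_simp
  simp

end Rescaling

theorem stmt3_general {E : Type*} [NormedAddCommGroup E] [NormedSpace ℝ E] [CompleteSpace E]
    {p : ℝ} (hp : 1 ≤ p) {T : ℝ} (hT : 0 < T) {b : ℝ → ℝ} (hb : AEStronglyMeasurable b)
    (hper : Function.Periodic b T) {M : ℝ} (hM : ∀ᵐ t, |b t| ≤ M) {N : ℕ} (hN : 0 < N)
    {ω : ℝ → E} (hω : IntegrableOn ω (Set.Ioc 0 T))
    (hG : IntegrableOn (fun z : ℝ × ℝ => ‖ω z.1 - ω z.2‖ ^ p / |z.1 - z.2| ^ p)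
      (Set.Ioc 0 T ×ˢ Set.Ioc 0 T)) :
    ‖∫ x in Set.Ioc 0 T, ((⨍ t in Set.Ioc 0 T, b t) - b (N * x)) • ω x‖ ≤
      T ^ ((2 * p - 2) / p) * M * (1 / (N : ℝ)) ^ ((p - 1) / p) *
        (∫ x in Set.Ioc 0 T, ∫ t in Set.Ioc 0 T, ‖ω x - ω t‖ ^ p / |x - t| ^ p) ^ (1 / p) := by
  have hN' : (0 : ℝ) < N := Nat.cast_pos.2 hN
  have hscale := quasiMeasurePreserving_mul_left_volume hN'.ne'
  have hper' : Function.Periodic (fun t => b (N * t)) (T / N) := by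
    simpa [div_eq_inv_mul] using hper.const_mul (N : ℝ)
  have hNT : N * (T / N) = T := mul_div_cancel₀ T hN'.ne'
  have hbound := norm_integral_average_sub_smul_le (N := N) (ω := ω) hp (div_pos hT hN')
    (hb.comp_quasiMeasurePreserving hscale) hper' (hscale.ae hM) (by rwa [hNT])
    (by simpa only [hNT, norm_slope_rpow] using hG)
  simp only [Function.comp_apply, hNT, norm_slope_rpow,
    setAverage_Ioc_comp_mul_left hN' hT.le] at hbound
  have hconst : (T * (T / N)) ^ (1 - 1 / p) =
      T ^ ((2 * p - 2) / p) * (1 / (N : ℝ)) ^ ((p - 1) / p) := by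
    have hp0 : p ≠ 0 := by positivity
    rw [show T * (T / N) = T ^ (2 : ℝ) * (1 / N) by rw [rpow_two]; ring,
      mul_rpow (by positivity) (by positivity), ← rpow_mul hT.le]
    congr 2 <;> field_simp
  exact hbound.trans_eq (by rw [hconst]; ring)

/-- Oscillation lemma with Gagliardo seminorm: for p > 2, b bounded 2π-periodic with
mean B, ε = 1/(2k), and ω with finite Gagliardo W^{1−1/p,p} seminorm on [0,2π],
|∫₀^{2π} ω(x)(B − b(x/ε)) dx| ≤ (2π)^{(2p−2)/p}·‖b‖_∞·ε^{(p−1)/p}·[ω]_{W^{1−1/p,p}}. -/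
theorem stmt3 (p : ℝ) (hp : 2 < p) (b : ℝ → ℝ) (hb : Measurable b)
    (hper : Function.Periodic b (2 * π)) (Mb : ℝ) (hMb : ∀ t, |b t| ≤ Mb)
    (k : ℕ) (hk : 0 < k) (ω : ℝ → ℝ)
    (hω : IntegrableOn ω (Set.Ioc 0 (2 * π)))
    (hG : IntegrableOn (fun z : ℝ × ℝ => |ω z.1 - ω z.2| ^ p / |z.1 - z.2| ^ p)
      (Set.Ioc 0 (2 * π) ×ˢ Set.Ioc 0 (2 * π))) :
    |∫ x in Set.Ioc (0 : ℝ) (2 * π),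
        ω x * ((1 / (2 * π)) * (∫ t in Set.Ioc (0 : ℝ) (2 * π), b t) - b (2 * k * x))| ≤
      (2 * π) ^ ((2 * p - 2) / p) * Mb * ((1 : ℝ) / (2 * k)) ^ ((p - 1) / p) *
        (∫ x in Set.Ioc (0 : ℝ) (2 * π), ∫ t in Set.Ioc (0 : ℝ) (2 * π),
          |ω x - ω t| ^ p / |x - t| ^ p) ^ (1 / p) := by
  simpa only [setAverage_eq, Real.volume_real_Ioc_of_le two_pi_pos.le, sub_zero, one_div,
    smul_eq_mul, mul_comm _ (ω _), Real.norm_eq_abs, Nat.cast_mul, Nat.cast_ofNat] using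
    stmt3_general (by linarith) two_pi_pos hb.aestronglyMeasurable hper (ae_of_all _ hMb)
      (N := 2 * k) (by omega) hω hG
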